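/- arXiv:0802.3149 — 2 statements merged into one kernel-verified Lean document; each statement's English description precedes it below -/
import Mathlib

section
/- Let A, B be binary forms of order 7 (homogeneous polynomials of degree 7 in x₁, x₂ over a field of characteristic zero). Writing 𝒞_q = (A,B)_q for the q-th transvectant of A and B, the identity 𝒞₁·𝒞₇ = −28·(𝒞₁,𝒞₁)₆ − (210/11)·(𝒞₁,𝒞₃)₄ + 8·(𝒞₁,𝒞₅)₂ + (1960/121)·(𝒞₃,𝒞₃)₂ + (35/11)·𝒞₃·𝒞₅ holds. -/
/-!
On forms of order `m`, Euler's identity `x₁∂₁F = mF - x₂∂₂F` removes all `x₁`-derivatives from a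
transvectant. After multiplication by `x₁^q`, all powers of `x₂` cancel, and
`x₁^q (F,G)_q` is a combination with rational coefficients of the products
`∂₂ⁱF · ∂₂^{q-i}G` (`X_pow_mul_transvectant` with `scaledDeriv_succ`).

For `F = A`, `G = B` and `q` odd the result is a combination of the Wronskians
`W_{ij} = ∂₂ⁱA ∂₂ʲB - ∂₂ʲA ∂₂ⁱB` with `i + j = q`, on which `∂₂` acts by
`∂₂W_{ij} = W_{i+1,j} + W_{i,j+1}`. Since `∂₂x₁ = 0`, the derivatives `∂₂ⁱ𝒞_q` are obtained by
differentiating these combinations. Multiplying the claim by `x₁⁸` and an integer that clears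
denominators thus turns it into an identity, homogeneous of weight `8`, between quadratic
polynomials in the `W_{ij}` (`wronskian_identity`). It is checked by expansion in the `∂₂ⁱA`,
`∂₂ʲB` as independent variables. Finally `x₁⁸` is cancelled.
-/

set_option linter.unusedSimpArgs false

open MvPolynomial Finset

/-- The `q`-th transvectant of two binary forms of orders `m` and `n`:
`(F,G)_q = ((m−q)!(n−q)!/(m!·n!)) · Σ_{i=0}^{q} (−1)^i C(q,i)
  (∂^q F/∂x₁^{q−i}∂x₂^{i}) (∂^q G/∂x₁^{i}∂x₂^{q−i})`. -/
noncomputable def transvectant {k : Type*} [Field k] [CharZero k]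
    (m n q : ℕ) (F G : MvPolynomial (Fin 2) k) : MvPolynomial (Fin 2) k :=
  C ((((m - q).factorial * (n - q).factorial : ℕ) : k) /
      ((m.factorial * n.factorial : ℕ) : k)) *
    ∑ i ∈ Finset.range (q + 1),
      C ((-1 : k) ^ i * (q.choose i : k)) *
        ((fun P => pderiv (0 : Fin 2) P)^[q - i] ((fun P => pderiv (1 : Fin 2) P)^[i] F)) *
        ((fun P => pderiv (0 : Fin 2) P)^[i] ((fun P => pderiv (1 : Fin 2) P)^[q - i] G))

/-! ### Homogeneity and Euler's identity -/

lemma iterate_isHomogeneous {k : Type*} [Field k] {F : MvPolynomial (Fin 2) k} {m : ℕ}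
    (hF : F.IsHomogeneous m) (j : Fin 2) (a : ℕ) :
    ((fun P => pderiv j P)^[a] F).IsHomogeneous (m - a) := by
  induction a with
  | zero => simpa using hF
  | succ a ih =>
    rw [Function.iterate_succ_apply']
    exact ih.pderiv

lemma transvectant_isHomogeneous {k : Type*} [Field k] [CharZero k]
    {F G : MvPolynomial (Fin 2) k} {m n : ℕ} (hF : F.IsHomogeneous m) (hG : G.IsHomogeneous n)
    (q : ℕ) : (transvectant m n q F G).IsHomogeneous ((m - q) + (n - q)) := by
  unfold transvectant
  rw [← zero_add (m - q + (n - q))]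
  refine (isHomogeneous_C _ _).mul (IsHomogeneous.sum _ _ _ fun i hi => ?_)
  have hiq : i ≤ q := Nat.lt_succ_iff.mp (Finset.mem_range.mp hi)
  have h1 := iterate_isHomogeneous (iterate_isHomogeneous hF 1 i) 0 (q - i)
  have h2 := iterate_isHomogeneous (iterate_isHomogeneous hG 1 (q - i)) 0 i
  rw [show m - i - (q - i) = m - q by omega] at h1
  rw [show n - (q - i) - i = n - q by omega] at h2
  simpa using ((isHomogeneous_C (Fin 2) ((-1 : k) ^ i * (q.choose i : k))).mul h1).mul h2

lemma commute_pderiv {k : Type*} [Field k] (F : MvPolynomial (Fin 2) k) (a : ℕ) :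
    pderiv (1 : Fin 2) ((fun P => pderiv (0 : Fin 2) P)^[a] F) =
      (fun P => pderiv (0 : Fin 2) P)^[a] (pderiv (1 : Fin 2) F) := by
  have h : Function.Commute (fun P : MvPolynomial (Fin 2) k => pderiv (1 : Fin 2) P)
      (fun P => pderiv (0 : Fin 2) P) := fun P => by
    have h0 : ⁅pderiv (R := k) (1 : Fin 2), pderiv (R := k) (0 : Fin 2)⁆ = 0 := by
      apply MvPolynomial.derivation_ext
      intro i
      fin_cases i <;> simp [Derivation.commutator_apply, pderiv_X]
    have h1 := congrArg (fun E : Derivation k _ (MvPolynomial (Fin 2) k) => E P) h0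
    simpa [Derivation.commutator_apply, sub_eq_zero] using h1
  exact (h.iterate_right a) F

/-- The scaled mixed derivative `x₁^a ∂^{a+i} F / ∂x₁^a ∂x₂^i`. -/
noncomputable def scaledDeriv {k : Type*} [Field k] (F : MvPolynomial (Fin 2) k) (a i : ℕ) :
    MvPolynomial (Fin 2) k :=
  X 0 ^ a * (fun P => pderiv (0 : Fin 2) P)^[a] ((fun P => pderiv (1 : Fin 2) P)^[i] F)

/-- Euler's identity for `∂^{a+i}F/∂x₁^a∂x₂^i`, which has order `m - i - a`. The subtraction may
truncate: the derivative is then `0`. -/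
lemma scaledDeriv_succ {k : Type*} [Field k] {F : MvPolynomial (Fin 2) k} {m : ℕ}
    (hF : F.IsHomogeneous m) (a i : ℕ) :
    scaledDeriv F (a + 1) i =
      ((m - i - a : ℕ) : MvPolynomial (Fin 2) k) * scaledDeriv F a i
        - X 1 * scaledDeriv F a (i + 1) := by
  have h := (iterate_isHomogeneous (iterate_isHomogeneous hF 1 i) 0 a).sum_X_mul_pderiv
  rw [Fin.sum_univ_two, commute_pderiv, nsmul_eq_mul] at h
  unfold scaledDeriv
  rw [Function.iterate_succ_apply', Function.iterate_succ_apply' _ i]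
  linear_combination X 0 ^ a * h

/-- The factor `x₁^q` is split as `x₁^{q-i} · x₁^i` over the two derivatives of each summand; the
normalising constant of the transvectant is the inverse of the product of falling factorials. -/
lemma X_pow_mul_transvectant {k : Type*} [Field k] [CharZero k] (m n q : ℕ)
    (hm : q ≤ m) (hn : q ≤ n) (F G : MvPolynomial (Fin 2) k) :
    ((m.descFactorial q * n.descFactorial q : ℕ) : MvPolynomial (Fin 2) k) *
        (X 0 ^ q * transvectant m n q F G) =
      ∑ i ∈ Finset.range (q + 1), ((-1) ^ i * (q.choose i : MvPolynomial (Fin 2) k)) *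
        scaledDeriv F (q - i) i * scaledDeriv G i (q - i) := by
  have hc : ((m.descFactorial q * n.descFactorial q : ℕ) : MvPolynomial (Fin 2) k) *
      C ((((m - q).factorial * (n - q).factorial : ℕ) : k) /
      ((m.factorial * n.factorial : ℕ) : k)) = 1 := by
    rw [← map_natCast (C : k →+* MvPolynomial (Fin 2) k), ← C_mul, ← C_1]
    congr 1
    rw [← Nat.factorial_mul_descFactorial hm, ← Nat.factorial_mul_descFactorial hn]
    have h1 : ((m - q).factorial : k) ≠ 0 := by exact_mod_cast Nat.factorial_ne_zero _
    have h2 : ((n - q).factorial : k) ≠ 0 := by exact_mod_cast Nat.factorial_ne_zero _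
    have h3 : (m.descFactorial q : k) ≠ 0 := by
      exact_mod_cast (Nat.descFactorial_pos.mpr hm).ne'
    have h4 : (n.descFactorial q : k) ≠ 0 := by
      exact_mod_cast (Nat.descFactorial_pos.mpr hn).ne'
    push_cast
    field_simp
  unfold transvectant
  rw [mul_left_comm (X 0 ^ q), ← mul_assoc, hc, one_mul, Finset.mul_sum]
  refine Finset.sum_congr rfl fun i hi => ?_
  have hiq : i ≤ q := Nat.lt_succ_iff.mp (Finset.mem_range.mp hi)
  unfold scaledDeriv
  rw [show (X 0 : MvPolynomial (Fin 2) k) ^ q = X 0 ^ (q - i) * X 0 ^ i by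
    rw [← pow_add, Nat.sub_add_cancel hiq]]
  simp only [map_mul, map_pow, map_neg, map_one, map_natCast]
  ring

/-! ### `x₂`-derivatives and Wronskians -/

/-- The iterated partial derivative `∂^i F / ∂x₂^i`. -/
noncomputable def yDeriv {k : Type*} [Field k] (i : ℕ) (F : MvPolynomial (Fin 2) k) :
    MvPolynomial (Fin 2) k :=
  (fun P => pderiv (1 : Fin 2) P)^[i] F

lemma yDeriv_zero {k : Type*} [Field k] (F : MvPolynomial (Fin 2) k) : yDeriv 0 F = F := rfl

lemma pderiv_yDeriv {k : Type*} [Field k] (i : ℕ) (F : MvPolynomial (Fin 2) k) :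
    pderiv (1 : Fin 2) (yDeriv i F) = yDeriv (i + 1) F :=
  (Function.iterate_succ_apply' _ i F).symm

lemma scaledDeriv_zero {k : Type*} [Field k] (F : MvPolynomial (Fin 2) k) (i : ℕ) :
    scaledDeriv F 0 i = yDeriv i F := by
  simp [scaledDeriv, yDeriv]

/-- The generalized Wronskian `W_{ij} = A⁽ⁱ⁾B⁽ʲ⁾ - A⁽ʲ⁾B⁽ⁱ⁾` of the `x₂`-derivatives. -/
noncomputable def W {k : Type*} [Field k] (A B : MvPolynomial (Fin 2) k) (i j : ℕ) :
    MvPolynomial (Fin 2) k :=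
  yDeriv i A * yDeriv j B - yDeriv j A * yDeriv i B

lemma W_self {k : Type*} [Field k] (A B : MvPolynomial (Fin 2) k) (i : ℕ) : W A B i i = 0 := by
  unfold W; ring

lemma pderiv_W {k : Type*} [Field k] (A B : MvPolynomial (Fin 2) k) (i j : ℕ) :
    pderiv (1 : Fin 2) (W A B i j) = W A B (i + 1) j + W A B i (j + 1) := by
  simp only [W, map_sub, Derivation.leibniz, pderiv_yDeriv, smul_eq_mul]
  ring

lemma pderiv_ofNat_mul {k : Type*} [Field k] (n : ℕ) [n.AtLeastTwo]
    (P : MvPolynomial (Fin 2) k) :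
    pderiv (1 : Fin 2) (ofNat(n) * P) = ofNat(n) * pderiv (1 : Fin 2) P := by
  rw [← Nat.cast_ofNat (R := MvPolynomial (Fin 2) k), Derivation.leibniz,
    Derivation.map_natCast]
  simp

/-- An equation for `N x₁^q ∂₂ⁱP` may be differentiated in `x₂`, since `x₁` is a constant
for `∂₂`. -/
lemma scaled_yDeriv_succ {k : Type*} [Field k] {P Q : MvPolynomial (Fin 2) k} {N q i : ℕ}
    (R : MvPolynomial (Fin 2) k)
    (h : (N : MvPolynomial (Fin 2) k) * (X 0 ^ q * yDeriv i P) = Q)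
    (hQ : pderiv (1 : Fin 2) Q = R) :
    (N : MvPolynomial (Fin 2) k) * (X 0 ^ q * yDeriv (i + 1) P) = R := by
  rw [← hQ, ← h, ← pderiv_yDeriv]
  simp [Derivation.leibniz, pderiv_X]

/-! ### The transvectants of `A` and `B` as combinations of Wronskians -/

/-- `x₁𝒞₁`, up to a constant. This and the next three lemmas reduce a mixed-derivative sum by
`scaledDeriv_succ`; all powers of `x₂` cancel. The index `0` in `yDeriv 0` lets
`scaled_yDeriv_succ` differentiate the equation repeatedly. -/
lemma base_1 {k : Type*} [Field k] [CharZero k] {A B : MvPolynomial (Fin 2) k}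
    (hA : A.IsHomogeneous 7) (hB : B.IsHomogeneous 7) :
    ((7 : ℕ) : MvPolynomial (Fin 2) k) * (X 0 ^ 1 * yDeriv 0 (transvectant 7 7 1 A B)) =
      W A B 0 1 := by
  have h := X_pow_mul_transvectant 7 7 1 (by norm_num) (by norm_num) A B
  simp only [Finset.sum_range_succ, Finset.sum_range_zero, scaledDeriv_succ hA,
    scaledDeriv_succ hB, scaledDeriv_zero, Nat.descFactorial, Nat.choose, Nat.reduceSub,
    Nat.reduceAdd, Nat.reduceMul, Nat.cast_ofNat] at h
  apply mul_left_cancel₀ (show (7 : MvPolynomial (Fin 2) k) ≠ 0 by norm_num)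
  rw [yDeriv_zero]
  simp only [W]
  push_cast at h ⊢
  linear_combination h

lemma base_3 {k : Type*} [Field k] [CharZero k] {A B : MvPolynomial (Fin 2) k}
    (hA : A.IsHomogeneous 7) (hB : B.IsHomogeneous 7) :
    ((1470 : ℕ) : MvPolynomial (Fin 2) k) * (X 0 ^ 3 * yDeriv 0 (transvectant 7 7 3 A B)) =
      7 * W A B 0 3 - 15 * W A B 1 2 := by
  have h := X_pow_mul_transvectant 7 7 3 (by norm_num) (by norm_num) A B
  simp only [Finset.sum_range_succ, Finset.sum_range_zero, scaledDeriv_succ hA,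
    scaledDeriv_succ hB, scaledDeriv_zero, Nat.descFactorial, Nat.choose, Nat.reduceSub,
    Nat.reduceAdd, Nat.reduceMul, Nat.cast_ofNat] at h
  apply mul_left_cancel₀ (show (30 : MvPolynomial (Fin 2) k) ≠ 0 by norm_num)
  rw [yDeriv_zero]
  simp only [W]
  push_cast at h ⊢
  linear_combination h

lemma base_5 {k : Type*} [Field k] [CharZero k] {A B : MvPolynomial (Fin 2) k}
    (hA : A.IsHomogeneous 7) (hB : B.IsHomogeneous 7) :
    ((17640 : ℕ) : MvPolynomial (Fin 2) k) * (X 0 ^ 5 * yDeriv 0 (transvectant 7 7 5 A B)) =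
      7 * W A B 0 5 - 15 * W A B 1 4 + 20 * W A B 2 3 := by
  have h := X_pow_mul_transvectant 7 7 5 (by norm_num) (by norm_num) A B
  simp only [Finset.sum_range_succ, Finset.sum_range_zero, scaledDeriv_succ hA,
    scaledDeriv_succ hB, scaledDeriv_zero, Nat.descFactorial, Nat.choose, Nat.reduceSub,
    Nat.reduceAdd, Nat.reduceMul, Nat.cast_ofNat] at h
  apply mul_left_cancel₀ (show (360 : MvPolynomial (Fin 2) k) ≠ 0 by norm_num)
  rw [yDeriv_zero]
  simp only [W]
  push_cast at h ⊢
  linear_combination h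

lemma base_7 {k : Type*} [Field k] [CharZero k] {A B : MvPolynomial (Fin 2) k}
    (hA : A.IsHomogeneous 7) (hB : B.IsHomogeneous 7) :
    ((5040 : ℕ) : MvPolynomial (Fin 2) k) * (X 0 ^ 7 * yDeriv 0 (transvectant 7 7 7 A B)) =
      W A B 0 7 - W A B 1 6 + W A B 2 5 - W A B 3 4 := by
  have h := X_pow_mul_transvectant 7 7 7 (by norm_num) (by norm_num) A B
  simp only [Finset.sum_range_succ, Finset.sum_range_zero, scaledDeriv_succ hA,
    scaledDeriv_succ hB, scaledDeriv_zero, Nat.descFactorial, Nat.choose, Nat.reduceSub,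
    Nat.reduceAdd, Nat.reduceMul, Nat.cast_ofNat] at h
  apply mul_left_cancel₀ (show (5040 : MvPolynomial (Fin 2) k) ≠ 0 by norm_num)
  rw [yDeriv_zero]
  simp only [W]
  push_cast at h ⊢
  linear_combination h

/-! ### The outer transvectants in terms of `x₂`-derivatives -/

lemma outer_12_12_6 {k : Type*} [Field k] [CharZero k] {F G : MvPolynomial (Fin 2) k}
    (hF : F.IsHomogeneous 12) (hG : G.IsHomogeneous 12) :
    14636160 * (X 0 ^ 6 * transvectant 12 12 6 F G) =
      22 * yDeriv 0 F * yDeriv 6 G - 77 * yDeriv 1 F * yDeriv 5 G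
        + 140 * yDeriv 2 F * yDeriv 4 G - 168 * yDeriv 3 F * yDeriv 3 G
        + 140 * yDeriv 4 F * yDeriv 2 G - 77 * yDeriv 5 F * yDeriv 1 G
        + 22 * yDeriv 6 F * yDeriv 0 G := by
  have h := X_pow_mul_transvectant 12 12 6 (by norm_num) (by norm_num) F G
  simp only [Finset.sum_range_succ, Finset.sum_range_zero, scaledDeriv_succ hF,
    scaledDeriv_succ hG, scaledDeriv_zero, Nat.descFactorial, Nat.choose, Nat.reduceSub,
    Nat.reduceAdd, Nat.reduceMul, Nat.cast_ofNat] at h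
  apply mul_left_cancel₀ (show (30240 : MvPolynomial (Fin 2) k) ≠ 0 by norm_num)
  push_cast at h ⊢
  linear_combination h

lemma outer_12_8_4 {k : Type*} [Field k] [CharZero k] {F G : MvPolynomial (Fin 2) k}
    (hF : F.IsHomogeneous 12) (hG : G.IsHomogeneous 8) :
    166320 * (X 0 ^ 4 * transvectant 12 8 4 F G) =
      99 * yDeriv 0 F * yDeriv 4 G - 165 * yDeriv 1 F * yDeriv 3 G
        + 135 * yDeriv 2 F * yDeriv 2 G - 63 * yDeriv 3 F * yDeriv 1 G
        + 14 * yDeriv 4 F * yDeriv 0 G := by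
  have h := X_pow_mul_transvectant 12 8 4 (by norm_num) (by norm_num) F G
  simp only [Finset.sum_range_succ, Finset.sum_range_zero, scaledDeriv_succ hF,
    scaledDeriv_succ hG, scaledDeriv_zero, Nat.descFactorial, Nat.choose, Nat.reduceSub,
    Nat.reduceAdd, Nat.reduceMul, Nat.cast_ofNat] at h
  apply mul_left_cancel₀ (show (120 : MvPolynomial (Fin 2) k) ≠ 0 by norm_num)
  push_cast at h ⊢
  linear_combination h

lemma outer_12_4_2 {k : Type*} [Field k] [CharZero k] {F G : MvPolynomial (Fin 2) k}
    (hF : F.IsHomogeneous 12) (hG : G.IsHomogeneous 4) :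
    264 * (X 0 ^ 2 * transvectant 12 4 2 F G) =
      22 * yDeriv 0 F * yDeriv 2 G - 11 * yDeriv 1 F * yDeriv 1 G
        + 2 * yDeriv 2 F * yDeriv 0 G := by
  have h := X_pow_mul_transvectant 12 4 2 (by norm_num) (by norm_num) F G
  simp only [Finset.sum_range_succ, Finset.sum_range_zero, scaledDeriv_succ hF,
    scaledDeriv_succ hG, scaledDeriv_zero, Nat.descFactorial, Nat.choose, Nat.reduceSub,
    Nat.reduceAdd, Nat.reduceMul, Nat.cast_ofNat] at h
  apply mul_left_cancel₀ (show (6 : MvPolynomial (Fin 2) k) ≠ 0 by norm_num)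
  push_cast at h ⊢
  linear_combination h

lemma outer_8_8_2 {k : Type*} [Field k] [CharZero k] {F G : MvPolynomial (Fin 2) k}
    (hF : F.IsHomogeneous 8) (hG : G.IsHomogeneous 8) :
    224 * (X 0 ^ 2 * transvectant 8 8 2 F G) =
      4 * yDeriv 0 F * yDeriv 2 G - 7 * yDeriv 1 F * yDeriv 1 G
        + 4 * yDeriv 2 F * yDeriv 0 G := by
  have h := X_pow_mul_transvectant 8 8 2 (by norm_num) (by norm_num) F G
  simp only [Finset.sum_range_succ, Finset.sum_range_zero, scaledDeriv_succ hF,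
    scaledDeriv_succ hG, scaledDeriv_zero, Nat.descFactorial, Nat.choose, Nat.reduceSub,
    Nat.reduceAdd, Nat.reduceMul, Nat.cast_ofNat] at h
  apply mul_left_cancel₀ (show (14 : MvPolynomial (Fin 2) k) ≠ 0 by norm_num)
  push_cast at h ⊢
  linear_combination h

/-! ### The identity between Wronskians -/

/-- The syzygy at the level of `x₂`-derivatives: each parenthesised linear form in the `W_{ij}` is
an `x₂`-derivative of a scaled `𝒞_q`, and the five groups on the right are the scaled
`(𝒞₁,𝒞₁)₆`, `(𝒞₁,𝒞₃)₄`, `(𝒞₁,𝒞₅)₂`, `(𝒞₃,𝒞₃)₂` and `𝒞₃𝒞₅`. It fails for independent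
`W_{ij}` and needs the Plücker relations among them, hence the expansion of `W`. -/
lemma wronskian_identity {k : Type*} [Field k] (A B : MvPolynomial (Fin 2) k) :
    5082 * (W A B 0 1 * (W A B 0 7 - W A B 1 6 + W A B 2 5 - W A B 3 4)) =
      -7 * (22 * (W A B 0 1) * (W A B 0 7 + 5 * W A B 1 6 + 9 * W A B 2 5 + 5 * W A B 3 4)
        + (-77) * (W A B 0 2) * (W A B 0 6 + 4 * W A B 1 5 + 5 * W A B 2 4)
        + 140 * (W A B 0 3 + W A B 1 2) * (W A B 0 5 + 3 * W A B 1 4 + 2 * W A B 2 3)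
        + (-168) * (W A B 0 4 + 2 * W A B 1 3) * (W A B 0 4 + 2 * W A B 1 3)
        + 140 * (W A B 0 5 + 3 * W A B 1 4 + 2 * W A B 2 3) * (W A B 0 3 + W A B 1 2)
        + (-77) * (W A B 0 6 + 4 * W A B 1 5 + 5 * W A B 2 4) * (W A B 0 2)
        + 22 * (W A B 0 7 + 5 * W A B 1 6 + 9 * W A B 2 5 + 5 * W A B 3 4) * (W A B 0 1))
      - 2 * (99 * (W A B 0 1) * (7 * W A B 0 7 + 13 * W A B 1 6 - 3 * W A B 2 5 - 9 * W A B 3 4)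
        + (-165) * (W A B 0 2) * (7 * W A B 0 6 + 6 * W A B 1 5 - 9 * W A B 2 4)
        + 135 * (W A B 0 3 + W A B 1 2) * (7 * W A B 0 5 - W A B 1 4 - 8 * W A B 2 3)
        + (-63) * (W A B 0 4 + 2 * W A B 1 3) * (7 * W A B 0 4 - 8 * W A B 1 3)
        + 14 * (W A B 0 5 + 3 * W A B 1 4 + 2 * W A B 2 3) * (7 * W A B 0 3 - 15 * W A B 1 2))
      + 44 * (22 * (W A B 0 1) * (7 * W A B 0 7 - W A B 1 6 - 3 * W A B 2 5 + 5 * W A B 3 4)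
        + (-11) * (W A B 0 2) * (7 * W A B 0 6 - 8 * W A B 1 5 + 5 * W A B 2 4)
        + 2 * (W A B 0 3 + W A B 1 2) * (7 * W A B 0 5 - 15 * W A B 1 4 + 20 * W A B 2 3))
      + 6 * (4 * (7 * W A B 0 3 - 15 * W A B 1 2) * (7 * W A B 0 5 - W A B 1 4 - 8 * W A B 2 3)
        + (-7) * (7 * W A B 0 4 - 8 * W A B 1 3) * (7 * W A B 0 4 - 8 * W A B 1 3)
        + 4 * (7 * W A B 0 5 - W A B 1 4 - 8 * W A B 2 3) * (7 * W A B 0 3 - 15 * W A B 1 2))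
      + 22 * ((7 * W A B 0 3 - 15 * W A B 1 2) *
        (7 * W A B 0 5 - 15 * W A B 1 4 + 20 * W A B 2 3)) := by
  unfold W
  ring

/-- For binary forms `A, B` of order `7`, writing `𝒞_q = (A,B)_q`, one has
`𝒞₁·𝒞₇ = −28·(𝒞₁,𝒞₁)₆ − (210/11)·(𝒞₁,𝒞₃)₄ + 8·(𝒞₁,𝒞₅)₂ + (1960/121)·(𝒞₃,𝒞₃)₂ + (35/11)·𝒞₃·𝒞₅`. -/
theorem syzygy_d7_r5 {k : Type*} [Field k] [CharZero k]
    (A B : MvPolynomial (Fin 2) k)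
    (hA : A.IsHomogeneous 7) (hB : B.IsHomogeneous 7) :
    transvectant 7 7 1 A B * transvectant 7 7 7 A B =
      C (-(28 : k)) *
          transvectant 12 12 6 (transvectant 7 7 1 A B) (transvectant 7 7 1 A B)
        - C ((210 / 11 : k)) *
            transvectant 12 8 4 (transvectant 7 7 1 A B) (transvectant 7 7 3 A B)
        + C ((8 : k)) *
            transvectant 12 4 2 (transvectant 7 7 1 A B) (transvectant 7 7 5 A B)
        + C ((1960 / 121 : k)) *
            transvectant 8 8 2 (transvectant 7 7 3 A B) (transvectant 7 7 3 A B)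
        + C ((35 / 11 : k)) * transvectant 7 7 3 A B * transvectant 7 7 5 A B := by
  have hc₁ : (transvectant 7 7 1 A B).IsHomogeneous 12 := transvectant_isHomogeneous hA hB 1
  have hc₃ : (transvectant 7 7 3 A B).IsHomogeneous 8 := transvectant_isHomogeneous hA hB 3
  have hc₅ : (transvectant 7 7 5 A B).IsHomogeneous 4 := transvectant_isHomogeneous hA hB 5
  have p₁₁ := outer_12_12_6 hc₁ hc₁
  have p₁₃ := outer_12_8_4 hc₁ hc₃
  have p₁₅ := outer_12_4_2 hc₁ hc₅
  have p₃₃ := outer_8_8_2 hc₃ hc₃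
  have e₁₀ := base_1 hA hB
  have e₁₁ := scaled_yDeriv_succ
    (W A B 0 2) e₁₀ (by
      simp only [map_add, map_sub, pderiv_ofNat_mul, pderiv_W, W_self]; ring)
  have e₁₂ := scaled_yDeriv_succ
    (W A B 0 3 + W A B 1 2) e₁₁ (by
      simp only [map_add, map_sub, pderiv_ofNat_mul, pderiv_W, W_self]; ring)
  have e₁₃ := scaled_yDeriv_succ
    (W A B 0 4 + 2 * W A B 1 3) e₁₂ (by
      simp only [map_add, map_sub, pderiv_ofNat_mul, pderiv_W, W_self]; ring)
  have e₁₄ := scaled_yDeriv_succ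
    (W A B 0 5 + 3 * W A B 1 4 + 2 * W A B 2 3) e₁₃ (by
      simp only [map_add, map_sub, pderiv_ofNat_mul, pderiv_W, W_self]; ring)
  have e₁₅ := scaled_yDeriv_succ
    (W A B 0 6 + 4 * W A B 1 5 + 5 * W A B 2 4) e₁₄ (by
      simp only [map_add, map_sub, pderiv_ofNat_mul, pderiv_W, W_self]; ring)
  have e₁₆ := scaled_yDeriv_succ
    (W A B 0 7 + 5 * W A B 1 6 + 9 * W A B 2 5 + 5 * W A B 3 4) e₁₅ (by
      simp only [map_add, map_sub, pderiv_ofNat_mul, pderiv_W, W_self]; ring)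
  have e₃₀ := base_3 hA hB
  have e₃₁ := scaled_yDeriv_succ
    (7 * W A B 0 4 - 8 * W A B 1 3) e₃₀ (by
      simp only [map_add, map_sub, pderiv_ofNat_mul, pderiv_W, W_self]; ring)
  have e₃₂ := scaled_yDeriv_succ
    (7 * W A B 0 5 - W A B 1 4 - 8 * W A B 2 3) e₃₁ (by
      simp only [map_add, map_sub, pderiv_ofNat_mul, pderiv_W, W_self]; ring)
  have e₃₃ := scaled_yDeriv_succ
    (7 * W A B 0 6 + 6 * W A B 1 5 - 9 * W A B 2 4) e₃₂ (by
      simp only [map_add, map_sub, pderiv_ofNat_mul, pderiv_W, W_self]; ring)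
  have e₃₄ := scaled_yDeriv_succ
    (7 * W A B 0 7 + 13 * W A B 1 6 - 3 * W A B 2 5 - 9 * W A B 3 4) e₃₃ (by
      simp only [map_add, map_sub, pderiv_ofNat_mul, pderiv_W, W_self]; ring)
  have e₅₀ := base_5 hA hB
  have e₅₁ := scaled_yDeriv_succ
    (7 * W A B 0 6 - 8 * W A B 1 5 + 5 * W A B 2 4) e₅₀ (by
      simp only [map_add, map_sub, pderiv_ofNat_mul, pderiv_W, W_self]; ring)
  have e₅₂ := scaled_yDeriv_succ
    (7 * W A B 0 7 - W A B 1 6 - 3 * W A B 2 5 + 5 * W A B 3 4) e₅₁ (by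
      simp only [map_add, map_sub, pderiv_ofNat_mul, pderiv_W, W_self]; ring)
  have e₇₀ := base_7 hA hB
  have a₁₃ : (11 : MvPolynomial (Fin 2) k) * C ((210 / 11 : k)) = 210 := by
    rw [← map_ofNat (C : k →+* MvPolynomial (Fin 2) k) 11, ← C_mul,
      ← map_ofNat (C : k →+* MvPolynomial (Fin 2) k) 210]
    norm_num
  have a₃₃ : (121 : MvPolynomial (Fin 2) k) * C ((1960 / 121 : k)) = 1960 := by
    rw [← map_ofNat (C : k →+* MvPolynomial (Fin 2) k) 121, ← C_mul,
      ← map_ofNat (C : k →+* MvPolynomial (Fin 2) k) 1960]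
    norm_num
  have a₃₅ : (11 : MvPolynomial (Fin 2) k) * C ((35 / 11 : k)) = 35 := by
    rw [← map_ofNat (C : k →+* MvPolynomial (Fin 2) k) 11, ← C_mul,
      ← map_ofNat (C : k →+* MvPolynomial (Fin 2) k) 35]
    norm_num
  have a₁₁ : C (-(28 : k)) = (-28 : MvPolynomial (Fin 2) k) := by
    rw [C_neg, map_ofNat]
  have a₁₅ : C (8 : k) = (8 : MvPolynomial (Fin 2) k) := map_ofNat _ 8
  rw [a₁₁, a₁₅]
  simp only [Nat.reduceAdd, Nat.cast_ofNat] at e₁₀ e₁₁ e₁₂ e₁₃ e₁₄ e₁₅ e₁₆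
  simp only [Nat.reduceAdd, Nat.cast_ofNat] at e₃₀ e₃₁ e₃₂ e₃₃ e₃₄ e₅₀ e₅₁ e₅₂ e₇₀
  -- `x₁⁸` absorbs the total weight `8` of every term; the integer clears all denominators.
  have hX : (179292960 : MvPolynomial (Fin 2) k) * X 0 ^ 8 ≠ 0 :=
    mul_ne_zero (by norm_num) (pow_ne_zero _ (X_ne_zero _))
  apply mul_left_cancel₀ hX
  have key := wronskian_identity A B
  rw [← e₁₀, ← e₁₁, ← e₁₂, ← e₁₃, ← e₁₄, ← e₁₅, ← e₁₆, ← e₃₀, ← e₃₁,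
    ← e₃₂, ← e₃₃, ← e₃₄, ← e₅₀, ← e₅₁, ← e₅₂, ← e₇₀] at key
  simp only [yDeriv_zero] at key p₁₁ p₁₃ p₁₅ p₃₃
  linear_combination key + 343 * X 0 ^ 2 * p₁₁ + 20580 * X 0 ^ 4 * p₁₃
    - 5433120 * X 0 ^ 6 * p₁₅ - 12965400 * X 0 ^ 6 * p₃₃
    + 16299360 * X 0 ^ 8 *
      transvectant 12 8 4 (transvectant 7 7 1 A B) (transvectant 7 7 3 A B) * a₁₃
    - 1481760 * X 0 ^ 8 *
      transvectant 8 8 2 (transvectant 7 7 3 A B) (transvectant 7 7 3 A B) * a₃₃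
    - 16299360 * X 0 ^ 8 * transvectant 7 7 3 A B * transvectant 7 7 5 A B * a₃₅
end

section
/- Evaluation lemma. Let 𝒢 be a polynomial in x₁, x₂, y₁, y₂ over a field of characteristic zero which is bihomogeneous of orders (p,q), let ℓ, m ≥ 0, and let σ denote the substitution x₁ ↦ u₁, y₁ ↦ u₁, x₂ ↦ u₂, y₂ ↦ u₂ into the two variables u₁, u₂. If ℓ ≥ m then σ(Ω_{xy}^ℓ((x y)^m · 𝒢)) = μ(p,q;ℓ,m) · σ(Ω_{xy}^{ℓ−m}𝒢), where μ(p,q;ℓ,m) = (ℓ!/(ℓ−m)!) · ((p+q−ℓ+2m+1)!/((p+q−ℓ+m+1)!)); if ℓ < m then σ(Ω_{xy}^ℓ((x y)^m · 𝒢)) = 0. -/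
/-!
Let `E` be the Euler operator `∑ᵢ Xᵢ ∂ᵢ`. The operators `Ω` and multiplication by `(x y)` satisfy
the `sl₂`-type relation `[Ω, (x y)] = E + 2` (`Omega_bracket_mul`), and they lower and raise
`E`-eigenvalues by `2`. Hence, if `E H = c H`, then
`Ω^(j+1) ((x y) H) = (x y) Ω^(j+1) H + (j + 1) (c + 2 - j) Ω^j H` (`iterate_Omega_bracket_mul`).
The substitution `σ` kills `(x y)`, so only the second term survives. Taking `H = (x y)^m 𝒢`, for
which `c = p + q + 2 m`, gives a recursion that lowers `ℓ` and `m` by one simultaneously; its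
coefficients are the ratios of consecutive values of `μ` (`mu_succ`). When `ℓ - m > p + q`, the
right-hand side vanishes for degree reasons (`iterate_Omega_eq_zero`).
-/

open MvPolynomial

/-- The Cayley Omega operator `Ω_{xy} = ∂²/∂x₁∂y₂ − ∂²/∂y₁∂x₂`, where the four
variables are indexed as `x₁ = 0`, `x₂ = 1`, `y₁ = 2`, `y₂ = 3`. -/
noncomputable def Omega {k : Type*} [CommRing k] (G : MvPolynomial (Fin 4) k) :
    MvPolynomial (Fin 4) k :=
  pderiv (0 : Fin 4) (pderiv 3 G) - pderiv 2 (pderiv 1 G)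

/-- The bracket factor `(x y) = x₁y₂ − y₁x₂`. -/
noncomputable def bracket {k : Type*} [CommRing k] : MvPolynomial (Fin 4) k :=
  X 0 * X 3 - X 2 * X 1

/-- A polynomial in `x₁, x₂, y₁, y₂` is bihomogeneous of orders `(p,q)` if it is
homogeneous of degree `p` in `(x₁,x₂)` and of degree `q` in `(y₁,y₂)`. -/
def Bihomogeneous {k : Type*} [CommRing k] (G : MvPolynomial (Fin 4) k)
    (p q : ℕ) : Prop :=
  G.IsWeightedHomogeneous ![1, 1, 0, 0] p ∧ G.IsWeightedHomogeneous ![0, 0, 1, 1] q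

/-- The substitution `σ : x₁ ↦ u₁, y₁ ↦ u₁, x₂ ↦ u₂, y₂ ↦ u₂`. -/
noncomputable def substU {k : Type*} [CommRing k] :
    MvPolynomial (Fin 4) k →ₐ[k] MvPolynomial (Fin 2) k :=
  aeval ![X 0, X 1, X 0, X 1]

/-- `μ(p,q;ℓ,m) = (ℓ!/(ℓ−m)!)·((p+q−ℓ+2m+1)!/((p+q−ℓ+m+1)!))`. -/
noncomputable def mu (p q ℓ m : ℕ) : ℚ :=
  ((ℓ.factorial : ℚ) / ((ℓ - m).factorial : ℚ)) *
    (((p + q + 2 * m + 1 - ℓ).factorial : ℚ) / ((p + q + m + 1 - ℓ).factorial : ℚ))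

lemma iterate_Omega_zero {k : Type*} [CommRing k] (j : ℕ) :
    Omega^[j] (0 : MvPolynomial (Fin 4) k) = 0 :=
  Function.iterate_fixed (by simp [Omega]) j

/-- The Euler operator `∑ᵢ Xᵢ ∂ᵢ`, which multiplies a form of total degree `n` by `n`. -/
noncomputable def eulerOp {k : Type*} [CommRing k] (H : MvPolynomial (Fin 4) k) :
    MvPolynomial (Fin 4) k :=
  X 0 * pderiv 0 H + X 1 * pderiv 1 H + X 2 * pderiv 2 H + X 3 * pderiv 3 H

lemma pderiv_swap {k : Type*} [CommRing k] (i j : Fin 4) (H : MvPolynomial (Fin 4) k) :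
    pderiv i (pderiv j H) = pderiv j (pderiv i H) := by
  induction H using MvPolynomial.induction_on with
  | C a => simp
  | add f g hf hg => simp [hf, hg]
  | mul_X f n h =>
    have key : ∀ a b : Fin 4, pderiv a (pderiv b (X n : MvPolynomial (Fin 4) k)) = 0 := by
      intro a b
      rw [pderiv_X, Pi.single_apply]
      split_ifs <;> simp
    simp only [Derivation.leibniz, map_add, smul_eq_mul, h, key]
    ring

lemma eulerOp_Omega {k : Type*} [CommRing k] (c : k) (H : MvPolynomial (Fin 4) k)
    (h : eulerOp H = C c * H) : eulerOp (Omega H) = C (c - 2) * Omega H := by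
  have key : Omega (eulerOp H) = eulerOp (Omega H) + 2 * Omega H := by
    simp only [Omega, eulerOp, map_add, map_sub, Derivation.leibniz, smul_eq_mul, pderiv_X,
      Pi.single_apply]
    simp [pderiv_swap 1 0, pderiv_swap 2 0, pderiv_swap 3 0, pderiv_swap 2 1, pderiv_swap 3 1,
      pderiv_swap 3 2]
    ring
  have h2 : Omega (C c * H) = C c * Omega H := by
    simp [Omega, mul_sub]
  rw [h, h2] at key
  rw [map_sub, sub_mul, key, map_ofNat]
  ring

lemma eulerOp_bracket_mul {k : Type*} [CommRing k] (c : k) (H : MvPolynomial (Fin 4) k)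
    (h : eulerOp H = C c * H) : eulerOp (bracket * H) = C (c + 2) * (bracket * H) := by
  have key : eulerOp (bracket * H) = bracket * eulerOp H + 2 * (bracket * H) := by
    simp only [bracket, eulerOp, map_sub, Derivation.leibniz, smul_eq_mul, pderiv_X,
      Pi.single_apply]
    simp
    ring
  rw [key, h, map_add, map_ofNat]
  ring

/-- The commutation relation `[Ω, (x y)] = E + 2`, with `E` the Euler operator. -/
lemma Omega_bracket_mul {k : Type*} [CommRing k] (H : MvPolynomial (Fin 4) k) :
    Omega (bracket * H) = bracket * Omega H + eulerOp H + 2 * H := by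
  simp only [Omega, bracket, eulerOp, map_add, map_sub, Derivation.leibniz, smul_eq_mul, pderiv_X,
    Pi.single_apply]
  simp [pderiv_swap 2 1]
  ring

lemma eulerOp_iterate_Omega {k : Type*} [CommRing k] (c : k) (H : MvPolynomial (Fin 4) k)
    (h : eulerOp H = C c * H) (j : ℕ) :
    eulerOp (Omega^[j] H) = C (c - 2 * j) * Omega^[j] H := by
  induction j with
  | zero => simpa using h
  | succ j ih =>
    rw [Function.iterate_succ_apply', eulerOp_Omega _ _ ih]
    congr 2
    push_cast
    ring

lemma eulerOp_bracket_pow_mul {k : Type*} [CommRing k] (c : k) (H : MvPolynomial (Fin 4) k)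
    (h : eulerOp H = C c * H) (m : ℕ) :
    eulerOp (bracket ^ m * H) = C (c + 2 * m) * (bracket ^ m * H) := by
  induction m with
  | zero => simpa using h
  | succ m ih =>
    rw [pow_succ', mul_assoc, eulerOp_bracket_mul _ _ ih]
    congr 2
    push_cast
    ring

/-- The coefficient is `∑_{i ≤ j} (c - 2 i + 2) = (j + 1) (c + 2 - j)`, obtained by moving the
bracket factor past the copies of `Ω` one at a time. -/
lemma iterate_Omega_bracket_mul {k : Type*} [CommRing k] (c : k) (H : MvPolynomial (Fin 4) k)
    (h : eulerOp H = C c * H) (j : ℕ) :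
    Omega^[j + 1] (bracket * H) =
      bracket * Omega^[j + 1] H + C ((j + 1) * (c + 2 - j)) * Omega^[j] H := by
  induction j with
  | zero =>
    simp only [zero_add, Function.iterate_one, Function.iterate_zero, id, Omega_bracket_mul, h]
    simp only [Nat.cast_zero, map_add, map_sub, map_mul, map_ofNat, map_one, map_zero]
    ring
  | succ j ih =>
    have hlin : ∀ (a : k) (A B : MvPolynomial (Fin 4) k),
        Omega (A + C a * B) = Omega A + C a * Omega B := by
      intro a A B
      simp [Omega]
      ring
    rw [Function.iterate_succ_apply', ih, hlin, Omega_bracket_mul,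
      eulerOp_iterate_Omega c H h, ← Function.iterate_succ_apply' Omega,
      ← Function.iterate_succ_apply' Omega]
    simp only [Nat.cast_add, Nat.cast_one, map_add, map_sub, map_mul, map_ofNat, map_one,
      map_natCast]
    ring

/-- Since `σ` kills the bracket factor, only the commutator term survives. -/
lemma substU_iterate_Omega_bracket_mul {k : Type*} [CommRing k] (c : k)
    (H : MvPolynomial (Fin 4) k) (h : eulerOp H = C c * H) (j : ℕ) :
    substU (Omega^[j + 1] (bracket * H)) =
      C ((j + 1) * (c + 2 - j)) * substU (Omega^[j] H) := by
  have hb : substU (bracket : MvPolynomial (Fin 4) k) = 0 := by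
    simp [substU, bracket]
  have hC : ∀ a : k, substU (C a) = C a := fun a => by simp [substU]
  rw [iterate_Omega_bracket_mul c H h, map_add, map_mul, map_mul, hb, hC, zero_mul, zero_add]

lemma Bihomogeneous.isHomogeneous {k : Type*} [CommRing k] {G : MvPolynomial (Fin 4) k}
    {p q : ℕ} (hG : Bihomogeneous G p q) : G.IsHomogeneous (p + q) := by
  intro d hd
  rw [← hG.1 hd, ← hG.2 hd]
  simp [Finsupp.weight_apply, Finsupp.sum_fintype, Fin.sum_univ_four]
  ring

lemma MvPolynomial.IsHomogeneous.eulerOp_eq {k : Type*} [CommRing k]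
    {G : MvPolynomial (Fin 4) k} {n : ℕ} (hG : G.IsHomogeneous n) :
    eulerOp G = C (n : k) * G := by
  have h := hG.sum_X_mul_pderiv
  rw [Fin.sum_univ_four] at h
  rw [eulerOp, h]
  simp

lemma iterate_Omega_eq_zero {k : Type*} [CommRing k] (j : ℕ) :
    ∀ (n : ℕ) (G : MvPolynomial (Fin 4) k), G.IsHomogeneous n → n < j → Omega^[j] G = 0 := by
  induction j with
  | zero => intro n G _ h; omega
  | succ j ih =>
    intro n G hG hn
    rw [Function.iterate_succ_apply]
    rcases Nat.eq_zero_or_pos n with rfl | hpos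
    · have : G = C (coeff 0 G) := totalDegree_eq_zero_iff_eq_C.mp
        (Nat.le_zero.mp hG.totalDegree_le)
      rw [this]
      simp [Omega, iterate_Omega_zero]
    · exact ih (n - 1 - 1) _ (hG.pderiv.pderiv.sub hG.pderiv.pderiv) (by omega)

lemma mu_succ (p q j m : ℕ) (hmj : m ≤ j) (hj : j ≤ p + q + m) :
    mu p q (j + 1) (m + 1) = (j + 1) * ((p + q : ℕ) + 2 * m + 2 - j) * mu p q j m := by
  obtain ⟨t, ht⟩ := Nat.exists_eq_add_of_le hj
  have e1 : p + q + 2 * (m + 1) + 1 - (j + 1) = t + m + 1 + 1 := by omega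
  have e2 : p + q + (m + 1) + 1 - (j + 1) = t + 1 := by omega
  have e3 : p + q + 2 * m + 1 - j = t + m + 1 := by omega
  have e4 : p + q + m + 1 - j = t + 1 := by omega
  have e5 : j + 1 - (m + 1) = j - m := by omega
  have ht' : ((p + q : ℕ) : ℚ) + m = j + t := by exact_mod_cast ht
  have e6 : ((p + q : ℕ) : ℚ) + 2 * m + 2 - j = t + m + 2 := by linarith
  rw [mu, mu, e1, e2, e3, e4, e5, e6, Nat.factorial_succ j, Nat.factorial_succ (t + m + 1)]
  push_cast
  ring

/-- Evaluation lemma: for `𝒢` bihomogeneous of orders `(p,q)`, if `ℓ ≥ m` then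
`σ(Ω_{xy}^ℓ((x y)^m·𝒢)) = μ(p,q;ℓ,m)·σ(Ω_{xy}^{ℓ−m}𝒢)`, and if `ℓ < m` then
`σ(Ω_{xy}^ℓ((x y)^m·𝒢)) = 0`. -/
theorem omega_evaluation_lemma {k : Type*} [Field k] [CharZero k]
    (G : MvPolynomial (Fin 4) k) (p q ℓ m : ℕ)
    (hG : Bihomogeneous G p q) :
    (m ≤ ℓ →
      substU (Omega^[ℓ] (bracket ^ m * G))
        = C ((mu p q ℓ m : ℚ) : k) * substU (Omega^[ℓ - m] G))
    ∧ (ℓ < m → substU (Omega^[ℓ] (bracket ^ m * G)) = 0) := by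
  have hE := hG.isHomogeneous.eulerOp_eq
  induction m generalizing ℓ with
  | zero =>
    refine ⟨fun _ => ?_, fun h => by omega⟩
    have hmu : mu p q ℓ 0 = 1 := by
      simp [mu, Nat.factorial_ne_zero]
    simp [hmu]
  | succ m ih =>
    cases ℓ with
    | zero =>
      refine ⟨fun h => by omega, fun _ => ?_⟩
      simp [bracket, substU]
    | succ j =>
      have step := substU_iterate_Omega_bracket_mul _ _
        (eulerOp_bracket_pow_mul _ _ hE m) j
      rw [← mul_assoc, ← pow_succ'] at step
      refine ⟨fun h => ?_, fun h => ?_⟩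
      · have hmj : m ≤ j := by omega
        rw [step, (ih j).1 hmj, show j + 1 - (m + 1) = j - m by omega]
        by_cases hj : j ≤ p + q + m
        · rw [mu_succ p q j m hmj hj, ← mul_assoc, ← C_mul]
          push_cast
          rfl
        -- For `j - m > p + q` the factorials in `mu` may have truncated arguments, but
        -- `Ω^(j - m) G` vanishes.
        · rw [iterate_Omega_eq_zero (j - m) (p + q) G hG.isHomogeneous (by omega)]
          simp
      · rw [step, (ih j).2 (by omega), mul_zero]
end
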